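/- For every integer n > 2, s_n ≡ −C_{n−1} + (−1)^n (mod 3), where C_{n−1} is the (n−1)-st Catalan number. -/

import Mathlib

def IsPermBlock {n : ℕ} (π : Equiv.Perm (Fin n)) (B : Finset (Fin n)) : Prop :=
  B.Nonempty ∧ (∃ i j : Fin n, B = Finset.Icc i j) ∧
    ∃ a b : Fin n, B.image π = Finset.Icc a b

def IsSimplePerm {n : ℕ} (π : Equiv.Perm (Fin n)) : Prop :=
  ∀ B : Finset (Fin n), IsPermBlock π B → B.card = 1 ∨ B = Finset.univ

noncomputable def simpleCount (n : ℕ) : ℕ :=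
  Nat.card {π : Equiv.Perm (Fin n) // IsSimplePerm π}

open Equiv Finset Nat PowerSeries

/-!
Following Albert, Atkinson and Klazar: a permutation of length at least `2` is a direct sum, a skew
sum, or the inflation of a unique simple permutation of length at least `3`; in the last case the
inflated blocks are its maximal proper blocks. Let `F = ∑_{n ≥ 1} n! Xⁿ` and `S = ∑_{n ≥ 3} sₙ Xⁿ`.
The sum-indecomposable permutations are counted by `F / (1 + F)`, and, by reversal, so are the
skew-indecomposable ones. Counting the permutations that are neither direct nor skew sums in two
ways yields `F + (S ∘ F + X) = 2 F / (1 + F)`. Substituting the compositional inverse `G` of `F`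
gives `X + S + G = 2 X / (1 + X)`. Modulo `3`, `F = X - X²`, whose compositional inverse is
`∑_{n ≥ 1} C_{n-1} Xⁿ` by the quadratic equation of the Catalan series.
-/

theorem coeff_pow_eq_sum_composition {R : Type*} [CommSemiring R] {F : R⟦X⟧}
    (hF : constantCoeff F = 0) (d n : ℕ) :
    coeff n (F ^ d) = ∑ c : Composition n with c.length = d, ∏ i, coeff (c.blocksFun i) F := by
  have prod_blocks (c : Composition n) :
      ∏ i, coeff (c.blocksFun i) F = (c.blocks.map (coeff · F)).prod := by
    rw [← c.ofFn_blocksFun, List.map_ofFn, List.prod_ofFn]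
    rfl
  have pos_of_ne_zero {l : Fin d →₀ ℕ} (hl : ∏ i, coeff (l i) F ≠ 0) (i : Fin d) : 0 < l i :=
    Nat.pos_of_ne_zero fun h ↦ hl <| prod_eq_zero (mem_univ i) (by simpa [h] using hF)
  rw [← Fin.prod_const, coeff_prod]
  refine sum_bij_ne_zero
    (fun l hl hne ↦ ⟨List.ofFn l, by simpa [List.forall_mem_ofFn_iff] using pos_of_ne_zero hne,
      by simpa [List.sum_ofFn] using hl⟩) ?_ ?_ ?_ ?_
  · intro l hl hne
    simp [Composition.length]
  · intro l _ _ l' _ _ h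
    exact DFunLike.coe_injective (List.ofFn_injective (congrArg Composition.blocks h))
  · intro c hc hne
    obtain rfl : c.length = d := by simpa using hc
    exact ⟨Finsupp.equivFunOnFinite.symm c.blocksFun, by simp, by simpa using hne,
      Composition.ext c.ofFn_blocksFun⟩
  · intro l hl hne
    rw [prod_blocks, List.map_ofFn, List.prod_ofFn]
    rfl

theorem coeff_subst_eq_sum_composition {R S : Type*} [CommRing R] [CommRing S] [Algebra R S]
    (A : R⟦X⟧) {F : S⟦X⟧} (hF : constantCoeff F = 0) (n : ℕ) :
    coeff n (A.subst F) =
      ∑ c : Composition n, coeff c.length A • ∏ i, coeff (c.blocksFun i) F := by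
  have support_subset : (Function.support fun d ↦ coeff d A • coeff n (F ^ d)) ⊆ range (n + 1) := by
    intro d hd
    by_contra hlt
    refine hd ?_
    dsimp only
    rw [coeff_pow_eq_sum_composition hF, filter_false_of_mem, sum_empty, smul_zero]
    rintro c - rfl
    exact hlt (by simp [c.length_le])
  rw [coeff_subst' (.of_constantCoeff_zero' hF), finsum_eq_sum_of_support_subset _ support_subset,
    ← sum_fiberwise_of_maps_to (g := Composition.length) (t := range (n + 1))
      (fun c _ ↦ mem_range_succ_iff.2 c.length_le)]
  refine sum_congr rfl fun d _ ↦ ?_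
  rw [coeff_pow_eq_sum_composition hF, smul_sum]
  refine sum_congr rfl fun c hc ↦ ?_
  obtain rfl := (mem_filter.1 hc).2
  rfl

section CompositionIndex

variable {n : ℕ} (c : Composition n)

theorem composition_lt_sizeUpTo_iff (x : Fin n) (k : ℕ) :
    (x : ℕ) < c.sizeUpTo k ↔ (c.index x : ℕ) < k := by
  constructor
  · intro h
    by_contra! hk
    exact (h.trans_le ((c.monotone_sizeUpTo hk).trans (c.sizeUpTo_index_le x))).false
  · intro h
    exact (c.lt_sizeUpTo_index_succ x).trans_le (c.monotone_sizeUpTo h)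

theorem composition_index_monotone : Monotone c.index := by
  intro x y hxy
  by_contra! hlt
  have hx := (composition_lt_sizeUpTo_iff c y (c.index x)).2 hlt
  have := c.sizeUpTo_index_le x
  omega

theorem composition_index_surjective : Function.Surjective c.index := fun k ↦
  ⟨c.embedding k ⟨0, c.one_le_blocksFun k⟩, c.index_embedding _ _⟩

theorem composition_index_lt_index_iff {x y : Fin n} :
    c.index x < c.index y ↔ ∃ t ∈ c.boundaries, x.castSucc < t ∧ t ≤ y.castSucc := by
  constructor
  · intro h
    refine ⟨c.boundary (c.index y).castSucc, by simp [Composition.boundaries], ?_, ?_⟩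
    · exact (composition_lt_sizeUpTo_iff c x _).2 h
    · exact c.sizeUpTo_index_le y
  · rintro ⟨t, ht, hxt, hty⟩
    obtain ⟨k, rfl⟩ : ∃ k, c.boundary k = t := by simpa [Composition.boundaries] using ht
    have hx := (composition_lt_sizeUpTo_iff c x k).1 hxt
    have hy := (composition_lt_sizeUpTo_iff c y k).not.1 (not_lt.2 hty)
    exact Fin.lt_def.2 (by omega)

theorem card_filter_composition_index_eq (k : Fin c.length) :
    #{x | c.index x = k} = c.blocksFun k := by
  have : ({x | c.index x = k} : Finset (Fin n)) = univ.map (c.embedding k).toEmbedding := by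
    ext x
    rw [mem_filter_univ, ← mem_coe, coe_map, coe_univ, Set.image_univ, eq_comm]
    exact c.mem_range_embedding_iff'.symm
  rw [this, card_map, Finset.card_univ, Fintype.card_fin]

theorem pair_subset_composition_boundaries : {0, Fin.last n} ⊆ c.boundaries :=
  insert_subset_iff.2 ⟨c.toCompositionAsSet.zero_mem,
    singleton_subset_iff.2 c.toCompositionAsSet.getLast_mem⟩

theorem mem_composition_boundaries_iff {t : Fin (n + 1)} :
    t ∈ c.boundaries ↔
      ∀ x y : Fin n, x.castSucc < t → t ≤ y.castSucc → c.index x ≠ c.index y := by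
  refine ⟨fun ht x y hx hy ↦ ((composition_index_lt_index_iff c).2 ⟨t, ht, hx, hy⟩).ne, fun h ↦ ?_⟩
  rcases t.eq_zero_or_eq_succ with rfl | ⟨x, rfl⟩
  · exact c.toCompositionAsSet.zero_mem
  rcases x.succ.eq_castSucc_or_eq_last with ⟨y, hy⟩ | hlast
  · have hxy := h x y (by simp) hy.le
    have hlt : x < y := by simpa [hy] using x.castSucc_lt_succ
    obtain ⟨t, ht, hxt, hty⟩ := (composition_index_lt_index_iff c).1
      ((composition_index_monotone c hlt.le).lt_of_ne hxy)
    rwa [(Fin.castSucc_lt_iff_succ_le.1 hxt).antisymm (hty.trans hy.ge)]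
  · exact hlast ▸ c.toCompositionAsSet.getLast_mem

theorem composition_boundaries_injective :
    Function.Injective (Composition.boundaries : Composition n → Finset (Fin (n + 1))) :=
  fun _ _ h ↦ (compositionEquiv n).injective (CompositionAsSet.ext h)

theorem composition_eq_of_index_eq_iff {c c' : Composition n}
    (h : ∀ x y, c.index x = c.index y ↔ c'.index x = c'.index y) : c = c' :=
  composition_boundaries_injective <| by
    ext t
    simp only [mem_composition_boundaries_iff, ne_eq, h]

theorem exists_composition_boundaries_eq {s : Finset (Fin (n + 1))} (zero_mem : 0 ∈ s)
    (last_mem : Fin.last n ∈ s) : ∃ c : Composition n, c.boundaries = s :=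
  ⟨(compositionEquiv n).symm ⟨s, zero_mem, last_mem⟩,
    congrArg CompositionAsSet.boundaries ((compositionEquiv n).apply_symm_apply _)⟩

theorem exists_composition_index_eq_iff (s : Setoid (Fin n))
    (hs : ∀ x, Set.OrdConnected {y | s x y}) :
    ∃ c : Composition n, ∀ x y, c.index x = c.index y ↔ s x y := by
  classical
  obtain ⟨c, hc⟩ := exists_composition_boundaries_eq
    (s := {t | ∀ x y : Fin n, x.castSucc < t → t ≤ y.castSucc → ¬ s x y}) (by simp) (by simp)
  have index_eq_iff {x y : Fin n} (hxy : x ≤ y) : c.index x = c.index y ↔ s x y := by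
    rw [← not_iff_not, ← Ne, ← (composition_index_monotone c hxy).lt_iff_ne,
      composition_index_lt_index_iff]
    simp only [hc, mem_filter_univ]
    refine ⟨fun ⟨_, ht, hxt, hty⟩ ↦ ht x y hxt hty, fun hn ↦ ?_⟩
    obtain ⟨z, ⟨hxz, hz⟩, hmin⟩ := WellFounded.has_min (wellFounded_lt (α := Fin n))
      {z | x ≤ z ∧ ¬ s x z} ⟨y, hxy, hn⟩
    have rel_of_lt {a : Fin n} (hxa : x ≤ a) (haz : a < z) : s x a := by
      by_contra ha
      exact hmin a ⟨hxa, ha⟩ haz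
    refine ⟨z.castSucc, fun a b haz hzb hab ↦ hz ?_, ?_, ?_⟩
    · rw [Fin.castSucc_lt_castSucc_iff] at haz
      rw [Fin.castSucc_le_castSucc_iff] at hzb
      have between {w : Fin n} (haw : a ≤ w) (hwb : w ≤ b) : s a w :=
        (hs a).out (s.refl a) hab ⟨haw, hwb⟩
      rcases le_total x a with hxa | hax
      · exact s.trans (rel_of_lt hxa haz) (between haz.le hzb)
      · exact s.trans (s.symm (between hax (hxz.trans hzb))) (between haz.le hzb)
    · exact Fin.castSucc_lt_castSucc_iff.2 (hxz.lt_of_ne (by rintro rfl; exact hz (s.refl x)))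
    · exact Fin.castSucc_le_castSucc_iff.2 (not_lt.1 (hmin y ⟨hxy, hn⟩))
  refine ⟨c, fun x y ↦ ?_⟩
  rcases le_total x y with hxy | hyx
  · exact index_eq_iff hxy
  · rw [eq_comm, index_eq_iff hyx, s.comm']

end CompositionIndex

section OrdConnected

variable {α γ : Type*} [LinearOrder α] [LinearOrder γ]

theorem ordConnected_image_of_monotone_of_surjective {f : α → γ} (hf : Monotone f)
    (hsurj : Function.Surjective f) {B : Set α} (hB : B.OrdConnected) :
    (f '' B).OrdConnected := by
  rw [Set.ordConnected_iff]
  rintro _ ⟨a, ha, rfl⟩ _ ⟨b, hb, rfl⟩ - _ ⟨haw, hwb⟩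
  obtain ⟨x, rfl⟩ := hsurj ‹γ›
  rcases le_total x a with hxa | hax
  · exact ⟨a, ha, haw.antisymm (hf hxa)⟩
  rcases le_total b x with hbx | hxb
  · exact ⟨b, hb, (hf hbx).antisymm hwb⟩
  · exact ⟨x, hB.out ha hb ⟨hax, hxb⟩, rfl⟩

theorem ordConnected_compl_singleton_of_image_eq_univ {f : α → γ} (hf : Monotone f) {B : Set α}
    (hB : B.OrdConnected) (himage : f '' B = Set.univ) {p : α} (hp : p ∉ B) :
    ({f p}ᶜ : Set γ).OrdConnected := by
  rw [Set.ordConnected_iff]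
  intro x hx y hy _ z ⟨hxz, hzy⟩ hz
  obtain ⟨a, ha, rfl⟩ := himage.superset (Set.mem_univ x)
  obtain ⟨b, hb, rfl⟩ := himage.superset (Set.mem_univ y)
  rw [Set.mem_singleton_iff.1 hz] at hxz hzy
  have hap : a ≤ p := le_of_not_ge fun h ↦ hx (hxz.antisymm (hf h))
  have hpb : p ≤ b := le_of_not_ge fun h ↦ hy ((hf h).antisymm hzy)
  exact hp (hB.out ha hb ⟨hap, hpb⟩)

theorem ordConnected_compl_of_union_eq_univ {A B : Set α} (hA : A.OrdConnected)
    (hB : B.OrdConnected) (hcover : A ∪ B = Set.univ) (hne : A ≠ Set.univ) :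
    Bᶜ.OrdConnected := by
  obtain ⟨p, hpA⟩ := (Set.ne_univ_iff_exists_notMem A).1 hne
  have mem_or (z : α) : z ∈ A ∨ z ∈ B := hcover.superset (Set.mem_univ z)
  have hpB := (mem_or p).resolve_left hpA
  rw [Set.ordConnected_iff]
  intro x hx y hy _ z ⟨hxz, hzy⟩ hz
  have hxp : x ≤ p := le_of_not_ge fun h ↦ hx (hB.out hpB hz ⟨h, hxz⟩)
  have hpy : p ≤ y := le_of_not_ge fun h ↦ hy (hB.out hz hpB ⟨hzy, h⟩)
  exact hpA (hA.out ((mem_or x).resolve_right hx) ((mem_or y).resolve_right hy) ⟨hxp, hpy⟩)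

theorem ordConnected_union {A B : Set α} (hA : A.OrdConnected) (hB : B.OrdConnected)
    (h : (A ∩ B).Nonempty) : (A ∪ B).OrdConnected := by
  obtain ⟨p, hpA, hpB⟩ := h
  rw [Set.ordConnected_iff]
  rintro x hx y hy - z ⟨hxz, hzy⟩
  rcases le_total z p with hzp | hpz
  · exact hx.imp (hA.out · hpA ⟨hxz, hzp⟩) (hB.out · hpB ⟨hxz, hzp⟩)
  · exact hy.imp (hA.out hpA · ⟨hpz, hzy⟩) (hB.out hpB · ⟨hpz, hzy⟩)

theorem union_eq_univ_of_isLowerSet_of_isUpperSet {A B : Set α} (hA : IsLowerSet A)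
    (hB : IsUpperSet B) (h : (A ∩ B).Nonempty) : A ∪ B = Set.univ := by
  obtain ⟨p, hpA, hpB⟩ := h
  exact Set.eq_univ_of_forall fun x ↦ (le_total x p).imp (hA · hpA) (hB · hpB)

theorem isLowerSet_or_isUpperSet_of_ordConnected_compl {B : Set α} (hB : B.OrdConnected)
    (hBc : Bᶜ.OrdConnected) : IsLowerSet B ∨ IsUpperSet B := by
  by_contra! h
  simp only [IsLowerSet, IsUpperSet, not_forall] at h
  obtain ⟨⟨b, a, hab, hb, ha⟩, c, d, hcd, hc, hd⟩ := h
  rcases le_total a c with hac | hca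
  · exact hBc.out ha hd ⟨hac, hcd⟩ hc
  · exact ha (hB.out hc hb ⟨hca, hab⟩)

end OrdConnected

theorem card_le_two_of_union_subsingleton {γ : Type*} {s t : Set γ} (hs : s.Subsingleton)
    (ht : t.Subsingleton) (hcover : s ∪ t = Set.univ) : ENat.card γ ≤ 2 :=
  calc ENat.card γ = (s ∪ t).encard := by rw [hcover, Set.encard_univ]
    _ ≤ s.encard + t.encard := Set.encard_union_le s t
    _ ≤ 1 + 1 := add_le_add (Set.encard_le_one_iff_subsingleton.2 hs)
        (Set.encard_le_one_iff_subsingleton.2 ht)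
    _ = 2 := one_add_one_eq_two

theorem exists_equiv_apply_eq {α γ δ : Type*} {f : α → γ} {g : α → δ}
    (hf : Function.Surjective f) (hg : Function.Surjective g) (h : ∀ x y, f x = f y ↔ g x = g y) :
    ∃ e : γ ≃ δ, ∀ x, e (f x) = g x := by
  have apply_eq (x : α) : g (Function.surjInv hf (f x)) = g x :=
    (h _ _).1 (Function.surjInv_eq hf (f x))
  refine ⟨.ofBijective (g ∘ Function.surjInv hf) ⟨fun k l hkl ↦ ?_, fun d ↦ ?_⟩, apply_eq⟩
  · simpa only [Function.surjInv_eq hf] using (h _ _).2 hkl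
  · obtain ⟨x, rfl⟩ := hg d
    exact ⟨f x, apply_eq x⟩

section Blocks

variable {α β γ δ : Type*} [LinearOrder α] [LinearOrder β] [LinearOrder γ] [LinearOrder δ]

/-- `B` is a block of the bijection `π` of linear orders: both `B` and its image are intervals.
Unlike in `IsPermBlock`, the empty set is allowed. -/
structure IsBlock (π : α ≃ β) (B : Set α) : Prop where
  ordConnected : B.OrdConnected
  ordConnected_image : (π '' B).OrdConnected

/-- The version of `IsSimplePerm` for bijections of arbitrary linear orders. -/
def IsSimple (π : α ≃ β) : Prop :=
  ∀ ⦃B : Set α⦄, IsBlock π B → B.Subsingleton ∨ B = Set.univ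

/-- `π` is the disjoint union of two nonempty blocks, that is, a direct sum or a skew sum of two
smaller bijections. -/
def IsSplit (π : α ≃ β) : Prop :=
  ∃ B : Set α, B.Nonempty ∧ Bᶜ.Nonempty ∧ IsBlock π B ∧ IsBlock π Bᶜ

/-- `π` is a direct sum of two smaller bijections: it maps some proper initial segment onto an
initial segment. -/
def IsSumDecomposable (π : α ≃ β) : Prop :=
  ∃ S : Set α, S.Nonempty ∧ Sᶜ.Nonempty ∧ IsLowerSet S ∧ IsLowerSet (π '' S)

/-- `π` is a skew sum of two smaller bijections: it maps some proper initial segment onto a final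
segment. -/
def IsSkewDecomposable (π : α ≃ β) : Prop :=
  ∃ S : Set α, S.Nonempty ∧ Sᶜ.Nonempty ∧ IsLowerSet S ∧ IsUpperSet (π '' S)

/-- `x` and `y` lie in a common proper block of `π`. If `π` is not split, the classes of this
relation are the maximal proper blocks, which determine the simple permutation that `π` inflates. -/
def SameProperBlock (π : α ≃ β) (x y : α) : Prop :=
  ∃ B : Set α, IsBlock π B ∧ B ≠ Set.univ ∧ x ∈ B ∧ y ∈ B

/-- `f` exhibits `π` as an inflation of `σ`: the fibres of `f` are blocks of `π`, and `σ` is the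
pattern formed by these blocks. -/
structure IsInflation (π : α ≃ β) (σ : γ ≃ δ) (f : α → γ) : Prop where
  monotone : Monotone f
  surjective : Function.Surjective f
  monotone_values : Monotone (σ ∘ f ∘ π.symm)

variable {π : α ≃ β} {σ : γ ≃ δ} {f : α → γ} {A B : Set α}

namespace IsBlock

theorem singleton (π : α ≃ β) (x : α) : IsBlock π {x} :=
  ⟨Set.ordConnected_singleton, by simpa using Set.ordConnected_singleton⟩

theorem union (hA : IsBlock π A) (hB : IsBlock π B) (h : (A ∩ B).Nonempty) :
    IsBlock π (A ∪ B) where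
  ordConnected := ordConnected_union hA.1 hB.1 h
  ordConnected_image := by
    rw [Set.image_union]
    exact ordConnected_union hA.2 hB.2 (Set.image_inter π.injective ▸ h.image π)

theorem compl_of_union_eq_univ (hA : IsBlock π A) (hB : IsBlock π B) (hcover : A ∪ B = Set.univ)
    (hne : A ≠ Set.univ) : IsBlock π Bᶜ where
  ordConnected := ordConnected_compl_of_union_eq_univ hA.1 hB.1 hcover hne
  ordConnected_image := by
    rw [Set.image_compl_eq π.bijective]
    refine ordConnected_compl_of_union_eq_univ hA.2 hB.2 ?_ fun h ↦ hne ?_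
    · rw [← Set.image_union, hcover, Set.image_univ, π.range_eq_univ]
    · exact π.injective.image_injective (h.trans (Set.image_univ_of_surjective π.surjective).symm)

theorem union_ne_univ (hπ : ¬ IsSplit π) (hA : IsBlock π A) (hB : IsBlock π B)
    (hA_ne : A ≠ Set.univ) (hB_ne : B ≠ Set.univ) : A ∪ B ≠ Set.univ := fun hcover ↦
  hπ ⟨B, Set.nonempty_iff_ne_empty.2 fun h ↦ hA_ne (by simpa [h] using hcover),
    Set.nonempty_compl.2 hB_ne, hB, hA.compl_of_union_eq_univ hB hcover hA_ne⟩

end IsBlock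

theorem IsSumDecomposable.isSplit : IsSumDecomposable π → IsSplit π := by
  rintro ⟨S, hS, hSc, hlow, hlow_image⟩
  refine ⟨S, hS, hSc, ⟨hlow.ordConnected, hlow_image.ordConnected⟩, hlow.compl.ordConnected, ?_⟩
  rw [Set.image_compl_eq π.bijective]
  exact hlow_image.compl.ordConnected

theorem IsSkewDecomposable.isSplit : IsSkewDecomposable π → IsSplit π := by
  rintro ⟨S, hS, hSc, hlow, hup_image⟩
  refine ⟨S, hS, hSc, ⟨hlow.ordConnected, hup_image.ordConnected⟩, hlow.compl.ordConnected, ?_⟩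
  rw [Set.image_compl_eq π.bijective]
  exact hup_image.compl.ordConnected

theorem isSplit_iff : IsSplit π ↔ IsSumDecomposable π ∨ IsSkewDecomposable π := by
  refine ⟨?_, fun h ↦ h.elim (·.isSplit) (·.isSplit)⟩
  rintro ⟨B, hB, hBc, hblock, hblock_compl⟩
  have hblock_image := hblock_compl.2
  rw [Set.image_compl_eq π.bijective] at hblock_image
  have image_compl := Set.image_compl_eq (s := B) π.bijective
  rcases isLowerSet_or_isUpperSet_of_ordConnected_compl hblock.1 hblock_compl.1 with hB' | hB' <;>
    rcases isLowerSet_or_isUpperSet_of_ordConnected_compl hblock.2 hblock_image with hπB | hπB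
  · exact .inl ⟨B, hB, hBc, hB', hπB⟩
  · exact .inr ⟨B, hB, hBc, hB', hπB⟩
  · exact .inr ⟨Bᶜ, hBc, by rwa [compl_compl], hB'.compl, by rw [image_compl]; exact hπB.compl⟩
  · exact .inl ⟨Bᶜ, hBc, by rwa [compl_compl], hB'.compl, by rw [image_compl]; exact hπB.compl⟩

theorem not_isSumDecomposable_and_isSkewDecomposable :
    ¬ (IsSumDecomposable π ∧ IsSkewDecomposable π) := by
  rintro ⟨⟨S, hS, hSc, hS_low, hπS⟩, T, hT, hTc, hT_low, hπT⟩
  have union_eq_univ (h : (S ∩ T).Nonempty) : S ∪ T = Set.univ := by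
    refine π.injective.image_injective ?_
    rw [Set.image_union, Set.image_univ_of_surjective π.surjective]
    exact union_eq_univ_of_isLowerSet_of_isUpperSet hπS hπT
      (Set.image_inter π.injective ▸ h.image π)
  rcases hS_low.total hT_low with hST | hTS
  · rw [Set.inter_eq_left.2 hST, Set.union_eq_right.2 hST] at union_eq_univ
    exact Set.nonempty_compl.1 hTc (union_eq_univ hS)
  · rw [Set.inter_eq_right.2 hTS, Set.union_eq_left.2 hTS] at union_eq_univ
    exact Set.nonempty_compl.1 hSc (union_eq_univ hT)

namespace IsInflation

theorem isBlock_image (hf : IsInflation π σ f) (hB : IsBlock π B) : IsBlock σ (f '' B) where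
  ordConnected := ordConnected_image_of_monotone_of_surjective hf.monotone hf.surjective hB.1
  ordConnected_image := by
    have image_eq : σ '' (f '' B) = (σ ∘ f ∘ π.symm) '' (π '' B) := by
      simp only [← Set.image_comp, Function.comp_assoc, π.symm_comp_self, Function.comp_id]
    rw [image_eq]
    exact ordConnected_image_of_monotone_of_surjective hf.monotone_values
      (σ.surjective.comp (hf.surjective.comp π.symm.surjective)) hB.2

theorem isBlock_preimage (hf : IsInflation π σ f) {C : Set γ} (hC : IsBlock σ C) :
    IsBlock π (f ⁻¹' C) where
  ordConnected := hC.1.preimage_mono hf.monotone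
  ordConnected_image := by
    have image_eq : π '' (f ⁻¹' C) = (σ ∘ f ∘ π.symm) ⁻¹' (σ '' C) := by
      rw [π.image_eq_preimage_symm, Set.preimage_comp, σ.preimage_image, Set.preimage_comp]
    rw [image_eq]
    exact hC.2.preimage_mono hf.monotone_values

theorem subsingleton_image (hf : IsInflation π σ f) (hσ : IsSimple σ) (hγ : 2 < ENat.card γ)
    (hB : IsBlock π B) (hne : B ≠ Set.univ) : (f '' B).Subsingleton := by
  refine (hσ (hf.isBlock_image hB)).resolve_right fun himage ↦ ?_
  obtain ⟨p, hp⟩ := (Set.ne_univ_iff_exists_notMem B).1 hne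
  have compl_isBlock : IsBlock σ {f p}ᶜ := by
    refine ⟨ordConnected_compl_singleton_of_image_eq_univ hf.monotone hB.1 himage hp, ?_⟩
    have := ordConnected_compl_singleton_of_image_eq_univ hf.monotone_values hB.2
      (by simp [himage, ← Set.image_image]) (p := π p) (by simpa using hp)
    simpa [Set.image_compl_eq σ.bijective] using this
  rcases hσ compl_isBlock with hsub | huniv
  · exact hγ.not_ge (card_le_two_of_union_subsingleton (Set.subsingleton_singleton (a := f p)) hsub
      (Set.union_compl_self _))
  · simp at huniv

theorem not_isSplit (hf : IsInflation π σ f) (hσ : IsSimple σ) (hγ : 2 < ENat.card γ) :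
    ¬ IsSplit π := by
  rintro ⟨B, hB, hBc, hblock, hblock_compl⟩
  refine hγ.not_ge (card_le_two_of_union_subsingleton
    (hf.subsingleton_image hσ hγ hblock (Set.nonempty_compl.1 hBc))
    (hf.subsingleton_image hσ hγ hblock_compl (by simpa [Set.nonempty_iff_ne_empty] using hB)) ?_)
  rw [← Set.image_union, Set.union_compl_self, Set.image_univ_of_surjective hf.surjective]

theorem apply_eq_apply_iff (hf : IsInflation π σ f) (hσ : IsSimple σ) (hγ : 2 < ENat.card γ)
    {x y : α} : f x = f y ↔ SameProperBlock π x y := by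
  constructor
  · refine fun hxy ↦
      ⟨f ⁻¹' {f x}, hf.isBlock_preimage (.singleton σ _), fun huniv ↦ ?_, rfl, hxy.symm⟩
    have univ_subsingleton : (Set.univ : Set γ).Subsingleton := by
      rw [← hf.surjective.image_preimage Set.univ, Set.preimage_univ, ← huniv]
      exact Set.subsingleton_singleton.anti (Set.image_preimage_subset _ _)
    exact hγ.not_ge (card_le_two_of_union_subsingleton univ_subsingleton univ_subsingleton
      (Set.union_self _))
  · rintro ⟨B, hB, hne, hx, hy⟩
    exact hf.subsingleton_image hσ hγ hB hne (Set.mem_image_of_mem f hx) (Set.mem_image_of_mem f hy)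

theorem isSimple (hf : IsInflation π σ f) (hker : ∀ x y, f x = f y ↔ SameProperBlock π x y) :
    IsSimple σ := by
  intro C hC
  refine or_iff_not_imp_right.2 fun hne a ha b hb ↦ ?_
  obtain ⟨x, rfl⟩ := hf.surjective a
  obtain ⟨y, rfl⟩ := hf.surjective b
  refine (hker x y).2 ⟨f ⁻¹' C, hf.isBlock_preimage hC, fun huniv ↦ hne ?_, ha, hb⟩
  rwa [Set.preimage_eq_univ_iff, hf.surjective.range_eq, Set.univ_subset_iff] at huniv

theorem pattern_unique [WellFoundedLT δ] {τ : γ ≃ δ} (hσ : IsInflation π σ f)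
    (hτ : IsInflation π τ f) : σ = τ := by
  have le_of_apply_le {ρ ρ' : γ ≃ δ} (hρ : IsInflation π ρ f) (hρ' : IsInflation π ρ' f) {k l : γ}
      (h : ρ k ≤ ρ l) : ρ' k ≤ ρ' l := by
    obtain ⟨x, rfl⟩ := hρ.surjective k
    obtain ⟨y, rfl⟩ := hρ.surjective l
    rcases le_total (π x) (π y) with hxy | hyx
    · simpa using hρ'.monotone_values hxy
    · have : ρ (f x) = ρ (f y) := h.antisymm (by simpa using hρ.monotone_values hyx)
      rw [ρ.injective this]
  let e : δ ≃o δ :=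
    { toEquiv := σ.symm.trans τ
      map_rel_iff' := fun {a b} ↦
        ⟨fun h ↦ by simpa using le_of_apply_le hτ hσ h,
          fun h ↦ le_of_apply_le hσ hτ (by simpa using h)⟩ }
  ext k
  simpa [e] using (DFunLike.congr_fun (Subsingleton.elim e (OrderIso.refl δ)) (σ k)).symm

end IsInflation

namespace SameProperBlock

theorem trans (hπ : ¬ IsSplit π) {x y z : α} :
    SameProperBlock π x y → SameProperBlock π y z → SameProperBlock π x z := by
  rintro ⟨B, hB, hB_ne, hx, hy⟩ ⟨C, hC, hC_ne, hy', hz⟩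
  exact ⟨B ∪ C, hB.union hC ⟨y, hy, hy'⟩, hB.union_ne_univ hπ hC hB_ne hC_ne, .inl hx, .inr hz⟩

/-- Lying in a common proper block is an equivalence relation when `π` is not split: two proper
blocks that meet have a proper block as their union. -/
def setoid [Nontrivial α] (hπ : ¬ IsSplit π) : Setoid α where
  r := SameProperBlock π
  iseqv :=
    { refl x := ⟨{x}, .singleton π x, Set.singleton_ne_univ x, rfl, rfl⟩
      symm := fun ⟨B, hB, hne, hx, hy⟩ ↦ ⟨B, hB, hne, hy, hx⟩
      trans := trans hπ }

theorem exists_block_eq [Finite α] [Nontrivial α] (hπ : ¬ IsSplit π) (x : α) :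
    ∃ B, IsBlock π B ∧ B ≠ Set.univ ∧ ∀ y, y ∈ B ↔ SameProperBlock π x y := by
  obtain ⟨M, -, ⟨hM, hM_ne, hxM⟩, hmax⟩ := Finite.exists_le_maximal
    (p := fun B ↦ IsBlock π B ∧ B ≠ Set.univ ∧ x ∈ B) (a := {x})
    ⟨.singleton π x, Set.singleton_ne_univ x, rfl⟩
  refine ⟨M, hM, hM_ne, fun y ↦ ⟨fun hy ↦ ⟨M, hM, hM_ne, hxM, hy⟩, ?_⟩⟩
  rintro ⟨B, hB, hB_ne, hx, hy⟩
  exact hmax ⟨hM.union hB ⟨x, hxM, hx⟩, hM.union_ne_univ hπ hB hM_ne hB_ne, .inl hxM⟩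
    Set.subset_union_left (.inr hy)

end SameProperBlock

theorem exists_pairwise_not_sameProperBlock [Finite α] [Nontrivial α] (hπ : ¬ IsSplit π) :
    ∃ x y z, ¬ SameProperBlock π x y ∧ ¬ SameProperBlock π x z ∧ ¬ SameProperBlock π y z := by
  inhabit α
  obtain ⟨B, hB, hB_ne, mem_B⟩ := SameProperBlock.exists_block_eq hπ (default : α)
  obtain ⟨y, hy⟩ := (Set.ne_univ_iff_exists_notMem B).1 hB_ne
  obtain ⟨C, hC, hC_ne, mem_C⟩ := SameProperBlock.exists_block_eq hπ y
  obtain ⟨z, hz⟩ := (Set.ne_univ_iff_exists_notMem _).1 (hB.union_ne_univ hπ hC hB_ne hC_ne)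
  rw [Set.mem_union, not_or] at hz
  exact ⟨default, y, z, (mem_B y).not.1 hy, (mem_B z).not.1 hz.1, (mem_C z).not.1 hz.2⟩

end Blocks

section Perm

variable {n : ℕ}

theorem isSimplePerm_iff_isSimple (π : Perm (Fin n)) : IsSimplePerm π ↔ IsSimple π := by
  have exists_icc_iff (B : Finset (Fin n)) (hB : B.Nonempty) :
      (∃ i j, B = Finset.Icc i j) ↔ (B : Set (Fin n)).OrdConnected := by
    constructor
    · rintro ⟨i, j, rfl⟩
      rw [coe_Icc]
      exact Set.ordConnected_Icc
    · refine fun h ↦ ⟨B.min' hB, B.max' hB, subset_antisymm (fun x hx ↦ ?_) fun x hx ↦ ?_⟩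
      · exact Finset.mem_Icc.2 ⟨B.min'_le x hx, B.le_max' x hx⟩
      · exact h.out (B.min'_mem hB) (B.max'_mem hB) (Finset.mem_Icc.1 hx)
  have isPermBlock_iff (B : Finset (Fin n)) :
      IsPermBlock π B ↔ B.Nonempty ∧ IsBlock π (B : Set (Fin n)) := by
    refine and_congr_right fun hB ↦ ?_
    rw [exists_icc_iff B hB, exists_icc_iff _ (hB.image π), coe_image]
    exact ⟨fun h ↦ ⟨h.1, h.2⟩, fun h ↦ ⟨h.1, h.2⟩⟩
  constructor
  · intro h B hB
    rcases B.eq_empty_or_nonempty with rfl | hne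
    · exact .inl Set.subsingleton_empty
    · lift B to Finset (Fin n) using B.toFinite
      exact (h B ((isPermBlock_iff B).2 ⟨hne, hB⟩)).imp
        (fun hcard ↦ card_le_one_iff_subsingleton.1 hcard.le) coe_eq_univ.2
  · intro h B hB
    obtain ⟨hne, hblock⟩ := (isPermBlock_iff B).1 hB
    exact (h hblock).imp
      (fun hsub ↦ (card_le_one_iff_subsingleton.2 hsub).antisymm hne.card_pos) coe_eq_univ.1

theorem exists_isInflation {π : Perm (Fin n)} (hn : 2 ≤ n) (hπ : ¬ IsSplit π) :
    ∃ (c : Composition n) (σ : Perm (Fin c.length)),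
      IsInflation π σ c.index ∧ IsSimple σ ∧ 2 < c.length := by
  have : Nontrivial (Fin n) := Fin.nontrivial_iff_two_le.2 hn
  let s := SameProperBlock.setoid hπ
  have class_block (x : Fin n) : IsBlock π {y | s x y} := by
    obtain ⟨B, hB, -, mem_B⟩ := SameProperBlock.exists_block_eq hπ x
    rwa [show B = {y | s x y} from Set.ext mem_B] at hB
  obtain ⟨c, hc⟩ := exists_composition_index_eq_iff s fun x ↦ (class_block x).ordConnected
  obtain ⟨c', hc'⟩ := exists_composition_index_eq_iff (s.comap π.symm) fun v ↦ by
    have := (class_block (π.symm v)).ordConnected_image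
    rwa [π.image_eq_preimage_symm] at this
  obtain ⟨e, he⟩ := exists_equiv_apply_eq (composition_index_surjective c)
    ((composition_index_surjective c').comp π.surjective)
    fun x y ↦ by simp [hc, hc', Setoid.comap_rel]
  have length_eq : c'.length = c.length := by simpa using (Fintype.card_congr e).symm
  have inflation : IsInflation π (e.trans (finCongr length_eq)) c.index :=
    { monotone := composition_index_monotone c
      surjective := composition_index_surjective c
      monotone_values v w hvw := by
        simpa [he] using composition_index_monotone c' hvw }
  refine ⟨c, _, inflation, inflation.isSimple hc, ?_⟩
  obtain ⟨x, y, z, hxy, hxz, hyz⟩ := exists_pairwise_not_sameProperBlock hπ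
  rw [← Fintype.card_fin c.length, Fintype.two_lt_card_iff]
  exact ⟨_, _, _, (hc x y).not.2 hxy, (hc x z).not.2 hxz, (hc y z).not.2 hyz⟩

theorem existsUnique_isInflation {π : Perm (Fin n)} (hn : 2 ≤ n) (hπ : ¬ IsSplit π) :
    ∃! p : Σ c : Composition n, Perm (Fin c.length),
      (2 < p.1.length ∧ IsSimple p.2) ∧ IsInflation π p.2 p.1.index := by
  obtain ⟨c, σ, hf, hσ, hc⟩ := exists_isInflation hn hπ
  refine ⟨⟨c, σ⟩, ⟨⟨hc, hσ⟩, hf⟩, ?_⟩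
  rintro ⟨c', σ'⟩ ⟨⟨hc', hσ'⟩, hf'⟩
  obtain rfl : c' = c := composition_eq_of_index_eq_iff fun x y ↦
    (hf'.apply_eq_apply_iff hσ' (by simpa using hc')).trans
      (hf.apply_eq_apply_iff hσ (by simpa using hc)).symm
  exact congrArg (Sigma.mk c') (hf'.pattern_unique hf)

end Perm

theorem sum_Icc_neg_one_pow_card {ι : Type*} [DecidableEq ι] {s t : Finset ι} (h : s ⊆ t) :
    ∑ u ∈ Finset.Icc s t, (-1 : ℤ) ^ #u = if s = t then (-1) ^ #s else 0 := by
  have disjoint_of_mem {u : Finset ι} (hu : u ∈ (t \ s).powerset) : Disjoint s u :=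
    disjoint_sdiff.mono_right (mem_powerset.1 hu)
  have union_injOn : Set.InjOn (s ∪ ·) ((t \ s).powerset : Set (Finset ι)) :=
    fun u hu v hv huv ↦
      calc u = (s ∪ u) \ s := (union_sdiff_cancel_left (disjoint_of_mem hu)).symm
        _ = (s ∪ v) \ s := congrArg (· \ s) huv
        _ = v := union_sdiff_cancel_left (disjoint_of_mem hv)
  have sdiff_eq_empty_iff : t \ s = ∅ ↔ s = t :=
    sdiff_eq_empty_iff_subset.trans ⟨h.antisymm, fun heq ↦ heq.ge⟩
  calc ∑ u ∈ Finset.Icc s t, (-1 : ℤ) ^ #u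
      = ∑ u ∈ (t \ s).powerset, (-1) ^ #(s ∪ u) := by
        rw [Finset.Icc_eq_image_powerset h, sum_image union_injOn]
    _ = ∑ u ∈ (t \ s).powerset, (-1) ^ #s * (-1) ^ #u :=
        sum_congr rfl fun u hu ↦ by rw [card_union_of_disjoint (disjoint_of_mem hu), pow_add]
    _ = if s = t then (-1) ^ #s else 0 := by
        rw [← Finset.mul_sum, sum_powerset_neg_one_pow_card]
        simp only [sdiff_eq_empty_iff, mul_ite, mul_one, mul_zero]

section Counting

open scoped Classical in
theorem card_monotone_comp_perm {n : ℕ} {ι : Type*} [LinearOrder ι] [Fintype ι] (g : Fin n → ι) :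
    #{τ : Perm (Fin n) | Monotone (g ∘ τ)} = ∏ k, (#{x | g x = k})! := by
  have card_stabilizer : #{τ : Perm (Fin n) | g ∘ τ = g} = ∏ k, (#{x | g x = k})! := by
    simpa only [Fintype.card_subtype] using DomMulAct.stabilizer_card g
  rw [← card_stabilizer]
  refine card_equiv (Equiv.mulRight (Tuple.sort g)⁻¹) fun τ ↦ ?_
  rw [mem_filter_univ, mem_filter_univ, ← Tuple.comp_sort_eq_comp_iff_monotone]
  exact (Equiv.comp_symm_eq (Tuple.sort g) g (g ∘ τ)).symm

variable {n : ℕ}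

open scoped Classical in
theorem card_isInflation (c : Composition n) (σ : Perm (Fin c.length)) :
    #{π : Perm (Fin n) | IsInflation π σ c.index} = ∏ k, (c.blocksFun k)! :=
  calc #{π : Perm (Fin n) | IsInflation π σ c.index}
      = #{τ : Perm (Fin n) | Monotone ((σ ∘ c.index) ∘ τ)} :=
        card_equiv (Equiv.inv (Perm (Fin n))) fun π ↦ by
          simp only [mem_filter_univ]
          exact ⟨(·.monotone_values),
            (⟨composition_index_monotone c, composition_index_surjective c, ·⟩)⟩
    _ = ∏ k, (#{x | σ (c.index x) = k})! := card_monotone_comp_perm _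
    _ = ∏ k, (#{x | σ (c.index x) = σ k})! := (Equiv.prod_comp σ _).symm
    _ = ∏ k, (c.blocksFun k)! := by
        simp only [EmbeddingLike.apply_eq_iff_eq, card_filter_composition_index_eq]

theorem isSkewDecomposable_iff_isSumDecomposable_trans_revPerm (π : Perm (Fin n)) :
    IsSkewDecomposable π ↔ IsSumDecomposable (π.trans Fin.revPerm) := by
  have isUpperSet_iff (T : Set (Fin n)) : IsUpperSet T ↔ IsLowerSet (Fin.revPerm '' T) := by
    rw [Equiv.image_eq_preimage_symm, Fin.revPerm_symm]
    exact ⟨fun h a b hba ha ↦ h (Fin.rev_le_rev.2 hba) ha,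
      fun h a b hab ha ↦ by simpa using h (Fin.rev_le_rev.2 hab) (by simpa using ha)⟩
  simp only [IsSkewDecomposable, IsSumDecomposable, isUpperSet_iff, ← Set.image_comp, coe_trans]

open scoped Classical in
theorem two_mul_card_not_isSumDecomposable (n : ℕ) :
    2 * #{π : Perm (Fin n) | ¬ IsSumDecomposable π} = n ! + #{π : Perm (Fin n) | ¬ IsSplit π} := by
  have card_not_skew : #{π : Perm (Fin n) | ¬ IsSkewDecomposable π} =
      #{π : Perm (Fin n) | ¬ IsSumDecomposable π} :=
    card_equiv (Equiv.mulLeft Fin.revPerm) fun π ↦ by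
      simp only [mem_filter_univ, isSkewDecomposable_iff_isSumDecomposable_trans_revPerm]
      rfl
  calc 2 * #{π : Perm (Fin n) | ¬ IsSumDecomposable π}
      = #{π : Perm (Fin n) | ¬ IsSumDecomposable π} +
          #{π : Perm (Fin n) | ¬ IsSkewDecomposable π} := by rw [card_not_skew, two_mul]
    _ = n ! + #{π : Perm (Fin n) | ¬ IsSplit π} := by
        rw [← card_union_add_card_inter, ← filter_or, ← filter_and]
        simp [← not_and_or, ← not_or, not_isSumDecomposable_and_isSkewDecomposable, isSplit_iff,
          Fintype.card_perm]

open scoped Classical in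
/-- The positions at which `π` splits as a direct sum, including both ends: `t` is a cut if `π` maps
the first `t` points onto an initial segment. -/
noncomputable def sumCuts (π : Perm (Fin n)) : Finset (Fin (n + 1)) :=
  {t | IsLowerSet (π '' {x | x.castSucc < t})}

theorem mem_sumCuts {π : Perm (Fin n)} {t : Fin (n + 1)} :
    t ∈ sumCuts π ↔ IsLowerSet (π '' {x | x.castSucc < t}) := by
  simp only [sumCuts, mem_filter_univ]

theorem mem_sumCuts_iff_forall {π : Perm (Fin n)} {t : Fin (n + 1)} :
    t ∈ sumCuts π ↔ ∀ v w, v ≤ w → (π.symm w).castSucc < t → (π.symm v).castSucc < t := by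
  rw [mem_sumCuts, π.image_eq_preimage_symm]
  exact ⟨fun h v w hvw hw ↦ h hvw hw, fun h w v hvw hw ↦ h v w hvw hw⟩

theorem pair_subset_sumCuts (π : Perm (Fin n)) : {0, Fin.last n} ⊆ sumCuts π := by
  simp [insert_subset_iff, mem_sumCuts_iff_forall, Fin.castSucc_lt_last]

theorem isInflation_refl_iff (π : Perm (Fin n)) (c : Composition n) :
    IsInflation π (Equiv.refl _) c.index ↔ c.boundaries ⊆ sumCuts π := by
  constructor
  · intro h t ht
    refine mem_sumCuts_iff_forall.2 fun v w hvw hw ↦ ?_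
    by_contra! hv
    exact (h.monotone_values hvw).not_gt
      ((composition_index_lt_index_iff c).2 ⟨t, ht, hw, hv⟩)
  · intro h
    refine ⟨composition_index_monotone c, composition_index_surjective c, fun v w hvw ↦ ?_⟩
    by_contra! hlt
    obtain ⟨t, ht, hw, hv⟩ := (composition_index_lt_index_iff c).1 hlt
    exact (mem_sumCuts_iff_forall.1 (h ht) v w hvw hw).not_ge hv

theorem isSumDecomposable_iff (π : Perm (Fin n)) :
    IsSumDecomposable π ↔ {0, Fin.last n} ≠ sumCuts π := by
  constructor
  · rintro ⟨S, hS, hSc, hlow, hlow_image⟩ heq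
    obtain ⟨y, hy, hmin⟩ := WellFounded.has_min (wellFounded_lt (α := Fin n)) Sᶜ hSc
    have S_eq : S = {x | x.castSucc < y.castSucc} := by
      ext x
      refine ⟨fun hx ↦ ?_, fun hx ↦ ?_⟩
      · exact lt_of_not_ge fun hyx ↦ hy (hlow (by simpa using hyx) hx)
      · exact of_not_not fun hxS ↦ hmin x hxS (by simpa using hx)
    have y_mem : y.castSucc ∈ sumCuts π := by
      rwa [mem_sumCuts, ← S_eq]
    rw [← heq, mem_insert, mem_singleton] at y_mem
    rcases y_mem with hzero | hlast
    · simp [S_eq, hzero] at hS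
    · exact y.castSucc_ne_last hlast
  · intro hne
    obtain ⟨t, ht, ht_pair⟩ := not_subset.1 fun h ↦ hne ((pair_subset_sumCuts π).antisymm h)
    rw [mem_insert, mem_singleton, not_or] at ht_pair
    obtain ⟨x, rfl⟩ := Fin.exists_succ_eq.2 ht_pair.1
    obtain ⟨y, hy⟩ := Fin.exists_castSucc_eq.2 ht_pair.2
    exact ⟨{z | z.castSucc < x.succ}, ⟨x, x.castSucc_lt_succ⟩, ⟨y, hy.ge.not_gt⟩,
      fun a b hba ha ↦ (Fin.castSucc_le_castSucc_iff.2 hba).trans_lt ha,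
        mem_sumCuts.1 ht⟩

open scoped Classical in
theorem sum_neg_one_pow_length_isInflation_refl (hn : n ≠ 0) (π : Perm (Fin n)) :
    ∑ c : Composition n with IsInflation π (Equiv.refl _) c.index, (-1 : ℤ) ^ c.length =
      if IsSumDecomposable π then 0 else -1 := by
  have reindex : ∑ c : Composition n with IsInflation π (Equiv.refl _) c.index,
      (-1 : ℤ) ^ (c.length + 1) = ∑ s ∈ Finset.Icc {0, Fin.last n} (sumCuts π), (-1) ^ #s := by
    refine sum_nbij Composition.boundaries (fun c hc ↦ ?_) composition_boundaries_injective.injOn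
      (fun s hs ↦ ?_) fun c _ ↦ by rw [c.card_boundaries_eq_succ_length]
    · rw [mem_filter_univ, isInflation_refl_iff] at hc
      exact Finset.mem_Icc.2 ⟨pair_subset_composition_boundaries c, hc⟩
    · obtain ⟨hpair, hcuts⟩ := Finset.mem_Icc.1 (mem_coe.1 hs)
      obtain ⟨c, rfl⟩ := exists_composition_boundaries_eq (hpair (by simp)) (hpair (by simp))
      exact ⟨c, by simpa [isInflation_refl_iff] using hcuts, rfl⟩
  have card_ends : #({0, Fin.last n} : Finset (Fin (n + 1))) = 2 :=
    card_pair (by simpa [Fin.ext_iff] using hn.symm)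
  rw [sum_Icc_neg_one_pow_card (pair_subset_sumCuts π), card_ends] at reindex
  rw [← neg_inj, ← sum_neg_distrib]
  simp only [pow_succ, mul_neg_one] at reindex
  rw [reindex, isSumDecomposable_iff]
  split_ifs <;> simp_all

open scoped Classical in
theorem sum_neg_one_pow_length_mul_prod_factorial (hn : n ≠ 0) :
    ∑ c : Composition n, (-1 : ℤ) ^ (c.length + 1) * ((∏ k, (c.blocksFun k)! : ℕ) : ℤ) =
      #{π : Perm (Fin n) | ¬ IsSumDecomposable π} :=
  calc ∑ c : Composition n, (-1 : ℤ) ^ (c.length + 1) * ((∏ k, (c.blocksFun k)! : ℕ) : ℤ)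
      = ∑ c : Composition n, ∑ π : Perm (Fin n) with IsInflation π (Equiv.refl _) c.index,
          (-1) ^ (c.length + 1) := by
        simp only [sum_const, card_isInflation, nsmul_eq_mul, mul_comm]
    _ = ∑ π : Perm (Fin n), -∑ c : Composition n with IsInflation π (Equiv.refl _) c.index,
          (-1) ^ c.length := by
        simp only [← sum_neg_distrib, sum_filter, pow_succ, mul_neg_one]
        rw [sum_comm]
        exact sum_congr rfl fun π _ ↦ sum_congr rfl fun c _ ↦ by split_ifs <;> simp
    _ = #{π : Perm (Fin n) | ¬ IsSumDecomposable π} := by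
        simp only [sum_neg_one_pow_length_isInflation_refl hn, card_filter, Nat.cast_sum]
        exact sum_congr rfl fun π _ ↦ by split_ifs <;> simp

open scoped Classical in
theorem simpleCount_eq_card_isSimple (n : ℕ) :
    simpleCount n = #{σ : Perm (Fin n) | IsSimple σ} := by
  simp only [simpleCount, isSimplePerm_iff_isSimple, Nat.card_eq_fintype_card, Fintype.card_subtype]

open scoped Classical in
theorem card_isSimple_isInflation (hn : 2 ≤ n) (π : Perm (Fin n)) :
    #{p : Σ c : Composition n, Perm (Fin c.length) |
      (2 < p.1.length ∧ IsSimple p.2) ∧ IsInflation π p.2 p.1.index} =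
      if IsSplit π then 0 else 1 := by
  split_ifs with hπ
  · refine card_eq_zero.2 (filter_eq_empty_iff.2 ?_)
    rintro ⟨c, σ⟩ - ⟨⟨hc, hσ⟩, hf⟩
    exact hf.not_isSplit hσ (by simpa using hc) hπ
  · exact (Fintype.existsUnique_iff_card_one _).1 (existsUnique_isInflation hn hπ)

open scoped Classical in
theorem sum_simpleCount_mul_prod_factorial (hn : 2 ≤ n) :
    ∑ c : Composition n with 2 < c.length, simpleCount c.length * ∏ k, (c.blocksFun k)! =
      #{π : Perm (Fin n) | ¬ IsSplit π} :=
  calc ∑ c : Composition n with 2 < c.length, simpleCount c.length * ∏ k, (c.blocksFun k)!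
      = ∑ c : Composition n with 2 < c.length, ∑ σ : Perm (Fin c.length) with IsSimple σ,
          #{π : Perm (Fin n) | IsInflation π σ c.index} := by
        simp only [card_isInflation, sum_const, smul_eq_mul, simpleCount_eq_card_isSimple]
    _ = ∑ p : Σ c : Composition n, Perm (Fin c.length) with 2 < p.1.length ∧ IsSimple p.2,
          #{π : Perm (Fin n) | IsInflation π p.2 p.1.index} := by
        simp only [sum_filter, Fintype.sum_sigma, ite_and]
        refine sum_congr rfl fun c _ ↦ ?_
        split_ifs <;> simp
    _ = ∑ π : Perm (Fin n), #{p : Σ c : Composition n, Perm (Fin c.length) |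
          (2 < p.1.length ∧ IsSimple p.2) ∧ IsInflation π p.2 p.1.index} := by
        simp only [← filter_filter]
        exact sum_card_bipartiteAbove_eq_sum_card_bipartiteBelow _
    _ = #{π : Perm (Fin n) | ¬ IsSplit π} := by
        simp only [card_isSimple_isInflation hn, card_filter, ite_not]

end Counting

section GeneratingFunctions

variable (R : Type*) [CommRing R]

/-- The generating function of all nonempty permutations. -/
noncomputable def factorialSeries : R⟦X⟧ :=
  .mk fun n ↦ if n = 0 then 0 else (n ! : R)

/-- The generating function of the simple permutations of length at least `3`. -/
noncomputable def simpleSeries : R⟦X⟧ :=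
  .mk fun n ↦ if 2 < n then (simpleCount n : R) else 0

/-- The power series `X - X² + X³ - ⋯`, the expansion of `X / (1 + X)`. -/
noncomputable def alternatingSeries : R⟦X⟧ :=
  .mk fun n ↦ if n = 0 then 0 else (-1) ^ (n + 1)

theorem constantCoeff_factorialSeries : constantCoeff (factorialSeries R) = 0 := by
  simp [factorialSeries, ← coeff_zero_eq_constantCoeff_apply]

variable {R}

theorem coeff_subst_factorialSeries (A : R⟦X⟧) (n : ℕ) :
    coeff n (A.subst (factorialSeries R)) =
      ∑ c : Composition n, coeff c.length A * ((∏ k, (c.blocksFun k)! : ℕ) : R) := by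
  rw [coeff_subst_eq_sum_composition _ (constantCoeff_factorialSeries R)]
  have blocksFun_ne_zero (c : Composition n) (k : Fin c.length) : c.blocksFun k ≠ 0 :=
    Nat.one_le_iff_ne_zero.1 (c.one_le_blocksFun k)
  simp [factorialSeries, blocksFun_ne_zero]

open scoped Classical in
theorem coeff_alternatingSeries_subst_factorialSeries {n : ℕ} (hn : n ≠ 0) :
    coeff n ((alternatingSeries R).subst (factorialSeries R)) =
      (#{π : Perm (Fin n) | ¬ IsSumDecomposable π} : R) := by
  have length_ne_zero (c : Composition n) : c.length ≠ 0 :=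
    (c.length_pos_of_pos (Nat.pos_of_ne_zero hn)).ne'
  have := congrArg (Int.cast : ℤ → R) (sum_neg_one_pow_length_mul_prod_factorial hn)
  simpa [coeff_subst_factorialSeries, alternatingSeries, length_ne_zero] using this

open scoped Classical in
theorem coeff_simpleSeries_subst_factorialSeries_add_X {n : ℕ} (hn : n ≠ 0) :
    coeff n ((simpleSeries R).subst (factorialSeries R) + X) =
      (#{π : Perm (Fin n) | ¬ IsSplit π} : R) := by
  obtain rfl | hn : n = 1 ∨ 2 ≤ n := by omega
  · have not_isSplit (π : Perm (Fin 1)) : ¬ IsSplit π := by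
      rintro ⟨B, ⟨x, hx⟩, ⟨y, hy⟩, -⟩
      exact hy (Subsingleton.elim x y ▸ hx)
    have length_lt (c : Composition 1) : ¬ 2 < c.length := c.length_le.trans_lt (by simp) |>.not_gt
    simp [coeff_subst_factorialSeries, simpleSeries, length_lt, not_isSplit]
  · have := congrArg (Nat.cast : ℕ → R) (sum_simpleCount_mul_prod_factorial hn)
    simpa [coeff_subst_factorialSeries, simpleSeries, sum_filter, coeff_X,
      show n ≠ 1 by omega] using this

variable (R) in
theorem factorialSeries_add_simpleSeries_subst_add_X :
    factorialSeries R + ((simpleSeries R).subst (factorialSeries R) + X) =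
      2 * (alternatingSeries R).subst (factorialSeries R) := by
  ext n
  rcases eq_or_ne n 0 with rfl | hn
  · have length_eq_zero (c : Composition 0) : c.length = 0 := Nat.le_zero.1 c.length_le
    rw [two_mul, map_add, map_add, map_add, coeff_subst_factorialSeries,
      coeff_subst_factorialSeries]
    simp [factorialSeries, simpleSeries, alternatingSeries, length_eq_zero]
  rw [map_add, coeff_simpleSeries_subst_factorialSeries_add_X hn, two_mul, map_add,
    coeff_alternatingSeries_subst_factorialSeries hn, ← two_mul]
  simpa [factorialSeries, hn] using
    (congrArg (Nat.cast : ℕ → R) (two_mul_card_not_isSumDecomposable n)).symm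

theorem X_add_simpleSeries_add_eq {G : R⟦X⟧} (hG : constantCoeff G = 0)
    (hFG : (factorialSeries R).subst G = X) :
    X + (simpleSeries R + G) = 2 * alternatingSeries R := by
  have hasSubst_F := HasSubst.of_constantCoeff_zero' (constantCoeff_factorialSeries R)
  have hasSubst_G := HasSubst.of_constantCoeff_zero' hG
  have subst_subst (A : R⟦X⟧) : PowerSeries.subst G (A.subst (factorialSeries R)) = A := by
    rw [subst_comp_subst_apply hasSubst_F hasSubst_G, hFG, X_subst]
  have := congrArg (PowerSeries.subst G) (factorialSeries_add_simpleSeries_subst_add_X R)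
  simpa only [two_mul, subst_add hasSubst_G, subst_subst, subst_X hasSubst_G, hFG] using this

theorem simpleCount_eq_of_subst_eq_X {G : R⟦X⟧} (hG : constantCoeff G = 0)
    (hFG : (factorialSeries R).subst G = X) {n : ℕ} (hn : 2 < n) :
    (simpleCount n : R) = -coeff n G + 2 * (-1) ^ (n + 1) := by
  have := congrArg (coeff n) (X_add_simpleSeries_add_eq hG hFG)
  simp only [two_mul, map_add, simpleSeries, alternatingSeries, coeff_mk, coeff_X, hn,
    show n ≠ 1 by omega, show n ≠ 0 by omega, if_true, if_false, zero_add] at this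
  rw [two_mul, ← this]
  ring

end GeneratingFunctions

theorem factorialSeries_zmod_three : factorialSeries (ZMod 3) = X - X ^ 2 := by
  have two_eq : (2 : ZMod 3) = -1 := rfl
  ext n
  match n with
  | 0 => simp [factorialSeries]
  | 1 => simp [factorialSeries, coeff_X_pow]
  | 2 => simp [factorialSeries, coeff_X, coeff_X_pow, two_eq]
  | n + 3 =>
    have factorial_eq_zero : ((n + 3)! : ZMod 3) = 0 :=
      (ZMod.natCast_eq_zero_iff _ 3).2 (Nat.dvd_factorial (by decide) (by omega))
    simp [factorialSeries, coeff_X, coeff_X_pow, factorial_eq_zero]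

theorem factorialSeries_subst_catalan :
    (factorialSeries (ZMod 3)).subst (X * catalanSeries.map (Nat.castRingHom (ZMod 3))) =
      (X : (ZMod 3)⟦X⟧) := by
  have hasSubst : HasSubst (X * catalanSeries.map (Nat.castRingHom (ZMod 3))) :=
    .of_constantCoeff_zero' (by simp)
  have catalan_eq :=
    congrArg (PowerSeries.map (Nat.castRingHom (ZMod 3))) catalanSeries_sq_mul_X_add_one
  simp only [map_add, map_mul, map_pow, map_one, map_X] at catalan_eq
  rw [factorialSeries_zmod_three, ← coe_substAlgHom hasSubst, map_sub, map_pow,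
    coe_substAlgHom hasSubst, subst_X hasSubst]
  linear_combination -X * catalan_eq

/-- For `n > 2`, `sₙ ≡ -C_{n-1} + (-1)ⁿ (mod 3)` where `C_{n-1}` is the `(n-1)`-st
Catalan number. -/
theorem simpleCount_congruent_catalan_mod_three (n : ℕ) (hn : 2 < n) :
    (simpleCount n : ℤ) ≡ -(catalan (n - 1) : ℤ) + (-1 : ℤ) ^ n [ZMOD (3 : ℤ)] := by
  obtain ⟨m, rfl⟩ : ∃ m, n = m + 1 := ⟨n - 1, by omega⟩
  have two_eq : (2 : ZMod 3) = -1 := rfl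
  refine (ZMod.intCast_eq_intCast_iff _ _ 3).1 ?_
  have := simpleCount_eq_of_subst_eq_X (by simp) factorialSeries_subst_catalan hn
  simpa [coeff_succ_X_mul, two_eq, pow_succ] using this
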